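/- Let p ≥ 7 be an odd integer and let c ≥ b₀. Let u : [0,1) → ℝ be real-analytic at ρ = 0 with u(0) = c and u'(0) = 0, and satisfy the self-similar profile equation (1−ρ²)u''(ρ) + (2/ρ − (2+2α)ρ)u'(ρ) − α(α+1)u(ρ) + u(ρ)^p = 0 for all ρ ∈ (0,1). Then for all ρ ∈ (0,1): √(1−ρ²)·|u'(ρ)| ≤ c^{(p+1)/2} and |u(ρ)| ≤ c. Moreover u(ρ) converges to a finite limit as ρ → 1⁻. -/

import Mathlib

open Set Real Filter

/-- The exponent `α = 2/(p-1)`. -/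
noncomputable def alphaP (p : ℕ) : ℝ := 2 / ((p : ℝ) - 1)

/-- `b₀ = (2(p+1)/(p-1)²)^(1/(p-1))`, the constant solution. -/
noncomputable def bZero (p : ℕ) : ℝ :=
  (2 * ((p : ℝ) + 1) / ((p : ℝ) - 1) ^ 2) ^ ((1 : ℝ) / ((p : ℝ) - 1))

/-- `b∞ = (2(p-3)/(p-1)²)^(1/(p-1))`. -/
noncomputable def bInfty (p : ℕ) : ℝ :=
  (2 * ((p : ℝ) - 3) / ((p : ℝ) - 1) ^ 2) ^ ((1 : ℝ) / ((p : ℝ) - 1))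

/-- The singular static solution `u∞(ρ) = b∞ ρ^(-α)`. -/
noncomputable def uInfty (p : ℕ) (ρ : ℝ) : ℝ := bInfty p * ρ ^ (-(alphaP p))

/-- The self-similar profile equation
`(1-ρ²)u'' + (2/ρ - (2+2α)ρ)u' - α(α+1)u + u^p = 0` at the point `ρ`. -/
def ProfileEq (p : ℕ) (u : ℝ → ℝ) (ρ : ℝ) : Prop :=
  (1 - ρ ^ 2) * deriv (deriv u) ρ + (2 / ρ - (2 + 2 * alphaP p) * ρ) * deriv u ρ
    - alphaP p * (alphaP p + 1) * u ρ + u ρ ^ p = 0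

lemma aux_pow (m : ℕ) (hm : 3 ≤ m) (c : ℝ) (hc : bZero (2 * m + 1) ≤ c) :
    0 < c ∧ alphaP (2 * m + 1) * (alphaP (2 * m + 1) + 1) ≤ (c ^ 2) ^ m := by
  have hm' : (3 : ℝ) ≤ m := by exact_mod_cast hm
  have hK : 0 < (2 * (((2 * m + 1 : ℕ) : ℝ) + 1) / (((2 * m + 1 : ℕ) : ℝ) - 1) ^ 2) := by
    push_cast
    have : (0 : ℝ) < 2 * m + 1 - 1 := by linarith
    positivity
  have hb : 0 < bZero (2 * m + 1) := Real.rpow_pos_of_pos hK _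
  refine ⟨hb.trans_le hc, ?_⟩
  have h1 : bZero (2 * m + 1) ^ (2 * m) ≤ c ^ (2 * m) := by gcongr
  have h2 : bZero (2 * m + 1) ^ (2 * m) =
      (2 * (((2 * m + 1 : ℕ) : ℝ) + 1) / (((2 * m + 1 : ℕ) : ℝ) - 1) ^ 2) := by
    unfold bZero
    rw [← Real.rpow_natCast, ← Real.rpow_mul hK.le]
    have : (1 : ℝ) / (((2 * m + 1 : ℕ) : ℝ) - 1) * ((2 * m : ℕ) : ℝ) = 1 := by
      push_cast
      field_simp
      ring
    rw [this, Real.rpow_one]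
  rw [← pow_mul]
  refine le_trans (le_of_eq ?_) h1
  rw [h2]
  unfold alphaP
  push_cast
  have : (2 : ℝ) * m + 1 - 1 = 2 * m := by ring
  rw [this]
  field_simp
  ring

theorem bounds_for_regular_solutions (p : ℕ) (hp_odd : Odd p) (hp : 7 ≤ p)
    (c : ℝ) (hc : bZero p ≤ c)
    (u : ℝ → ℝ) (hu : AnalyticAt ℝ u 0) (hu0 : u 0 = c) (hd0 : deriv u 0 = 0)
    (hdiff : ∀ ρ ∈ Ioo (0 : ℝ) 1, DifferentiableAt ℝ u ρ)
    (hdiff2 : ∀ ρ ∈ Ioo (0 : ℝ) 1, DifferentiableAt ℝ (deriv u) ρ)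
    (heq : ∀ ρ ∈ Ioo (0 : ℝ) 1, ProfileEq p u ρ) :
    (∀ ρ ∈ Ioo (0 : ℝ) 1,
      Real.sqrt (1 - ρ ^ 2) * |deriv u ρ| ≤ c ^ (((p : ℝ) + 1) / 2) ∧ |u ρ| ≤ c) ∧
    ∃ L : ℝ, Tendsto u (nhdsWithin 1 (Iio 1)) (nhds L) := by
  obtain ⟨m, rfl⟩ := hp_odd
  have hm : 3 ≤ m := by omega
  have hm' : (3 : ℝ) ≤ m := by exact_mod_cast hm
  obtain ⟨hc0, hcK⟩ := aux_pow m hm c hc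
  have hα0 : 0 < alphaP (2 * m + 1) := by
    unfold alphaP; push_cast
    have : (0 : ℝ) < 2 * m + 1 - 1 := by linarith
    positivity
  have hα : alphaP (2 * m + 1) ≤ 1 / 2 := by
    unfold alphaP; push_cast
    rw [div_le_div_iff₀ (by linarith) (by norm_num)]; linarith
  have hK0 : 0 < alphaP (2 * m + 1) * (alphaP (2 * m + 1) + 1) := by positivity
  unfold ProfileEq at heq
  set α := alphaP (2 * m + 1) with hαdef
  set K := α * (α + 1) with hKdef
  set H : ℝ → ℝ := fun r => (1 - r ^ 2) * (deriv u r) ^ 2 / 2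
    + (u r) ^ (2 * m + 2) / (2 * m + 2) - K * (u r) ^ 2 / 2 with hH
  have hHd : ∀ r ∈ Ioo (0 : ℝ) 1, HasDerivAt H
      (-(deriv u r) ^ 2 * (2 / r - (1 + 2 * α) * r)) r := by
    intro r hr
    have h1 := (hdiff r hr).hasDerivAt
    have h2 := (hdiff2 r hr).hasDerivAt
    have h3 := (((((hasDerivAt_id r).pow 2).const_sub 1).mul (h2.pow 2)).div_const 2).add
      ((h1.pow (2 * m + 2)).div_const (2 * m + 2 : ℝ)) |>.sub
      (((h1.pow 2).const_mul K).div_const 2)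
    refine h3.congr_deriv ?_
    have h4 := heq r hr
    have h5 : (2 * (m : ℝ) + 2) ≠ 0 := by positivity
    have h6 : ((2 * m + 2 : ℕ) : ℝ) * u r ^ (2 * m + 2 - 1) * deriv u r / (2 * m + 2)
        = u r ^ (2 * m + 1) * deriv u r := by
      push_cast
      field_simp
    rw [h6]
    simp only [Pi.pow_apply, id]
    push_cast
    linear_combination (deriv u r) * h4
  have hHc : ContinuousOn H (Ico 0 1) := by
    intro r hr
    rcases eq_or_lt_of_le hr.1 with h | h
    · subst h
      have h1 := hu.continuousAt
      have h2 := hu.deriv.continuousAt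
      apply ContinuousAt.continuousWithinAt
      simp only [hH]
      fun_prop
    · exact (hHd r ⟨h, hr.2⟩).continuousAt.continuousWithinAt
  have hanti : AntitoneOn H (Ico 0 1) := by
    apply antitoneOn_of_deriv_nonpos (convex_Ico 0 1) hHc
    · rw [interior_Ico]
      exact fun r hr => (hHd r hr).differentiableAt.differentiableWithinAt
    · rw [interior_Ico]
      intro r hr
      rw [(hHd r hr).deriv]
      have h1 : 2 ≤ 2 / r := by
        rw [le_div_iff₀ hr.1]; linarith [hr.2]
      have h2 : (1 + 2 * α) * r ≤ 2 := by nlinarith [hr.1, hr.2]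
      nlinarith [mul_nonneg (sq_nonneg (deriv u r)) (by linarith : 0 ≤ 2 / r - (1 + 2 * α) * r)]
  have hbd : ∀ ρ ∈ Ioo (0 : ℝ) 1, (1 - ρ ^ 2) * (deriv u ρ) ^ 2 / 2
      + (u ρ ^ 2) ^ (m + 1) / (2 * m + 2) - K * (u ρ) ^ 2 / 2
      ≤ (c ^ 2) ^ (m + 1) / (2 * m + 2) - K * c ^ 2 / 2 := by
    intro ρ hρ
    have h := hanti (left_mem_Ico.2 one_pos) ⟨hρ.1.le, hρ.2⟩ hρ.1.le
    simp only [hH, hu0, hd0] at h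
    rw [← pow_mul, ← pow_mul, show 2 * (m + 1) = 2 * m + 2 by ring]
    linarith
  have hub : ∀ ρ ∈ Ioo (0 : ℝ) 1, |u ρ| ≤ c := by
    intro ρ hρ
    by_contra! hlt
    have h := hbd ρ hρ
    have hsq : c ^ 2 < u ρ ^ 2 := by
      rw [← sq_abs (u ρ)]; gcongr
    have h0 : 0 ≤ (1 - ρ ^ 2) * (deriv u ρ) ^ 2 / 2 := by
      have : 0 ≤ 1 - ρ ^ 2 := by nlinarith [hρ.1, hρ.2]
      positivity
    have hcc : 0 < c ^ 2 := by positivity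
    generalize u ρ ^ 2 = x at *
    generalize c ^ 2 = y at *
    have hs : 0 < x / y - 1 := by rw [sub_pos, lt_div_iff₀ hcc]; linarith
    have hB := one_add_mul_self_lt_rpow_one_add (s := x / y - 1) (by linarith) hs.ne'
      (p := ((m + 1 : ℕ) : ℝ)) (by push_cast; linarith)
    rw [Real.rpow_natCast, add_sub_cancel, div_pow, lt_div_iff₀ (by positivity)] at hB
    push_cast at hB
    have e : (1 + ((m : ℝ) + 1) * (x / y - 1)) * y ^ (m + 1)
        = y ^ (m + 1) + (m + 1) * y ^ m * (x - y) := by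
      field_simp
      ring
    rw [e] at hB
    have h7 : (m + 1) * (K * (x - y)) ≤ (m + 1) * (y ^ m * (x - y)) := by
      have : 0 ≤ x - y := by linarith
      gcongr
    have h8 : x ^ (m + 1) / (2 * m + 2) - y ^ (m + 1) / (2 * m + 2) ≤ K * (x - y) / 2 := by
      linarith
    rw [← sub_div, div_le_iff₀ (by positivity)] at h8
    linarith
  have hdb : ∀ ρ ∈ Ioo (0 : ℝ) 1, Real.sqrt (1 - ρ ^ 2) * |deriv u ρ| ≤ c ^ (m + 1) := by
    intro ρ hρ
    have h0 : 0 ≤ 1 - ρ ^ 2 := by nlinarith [hρ.1, hρ.2]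
    refine (abs_le_of_sq_le_sq' ?_ (by positivity)).2
    rw [mul_pow, Real.sq_sqrt h0, sq_abs, ← pow_mul, mul_comm (m + 1) 2, pow_mul]
    have h := hbd ρ hρ
    have h1 : u ρ ^ 2 ≤ c ^ 2 := by
      rw [← sq_abs (u ρ)]; have := hub ρ hρ; gcongr
    have h2 : 0 ≤ (u ρ ^ 2) ^ (m + 1) / (2 * m + 2 : ℝ) := by positivity
    have h3 : (c ^ 2) ^ (m + 1) / (2 * m + 2 : ℝ) ≤ (c ^ 2) ^ (m + 1) / 2 := by
      gcongr; linarith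
    have h4 : K * u ρ ^ 2 ≤ K * c ^ 2 := by gcongr
    linarith
  refine ⟨fun ρ hρ => ⟨?_, hub ρ hρ⟩, ?_⟩
  · have : (((2 * m + 1 : ℕ) : ℝ) + 1) / 2 = ((m + 1 : ℕ) : ℝ) := by push_cast; ring
    rw [this, Real.rpow_natCast]
    exact hdb ρ hρ
  · set C := c ^ (m + 1) with hC
    have hC0 : 0 < C := by positivity
    set w : ℝ → ℝ := fun r => u r + (-2 * C) * Real.sqrt (1 - r) with hw
    have hwd : ∀ r ∈ Ioo (0 : ℝ) 1, HasDerivAt w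
        (deriv u r + (-2 * C) * (-1 / (2 * Real.sqrt (1 - r)))) r := by
      intro r hr
      exact (hdiff r hr).hasDerivAt.add
        ((((hasDerivAt_id r).const_sub 1).sqrt (by simp only [id]; linarith [hr.2])).const_mul _)
    have hmono : MonotoneOn w (Ioo 0 1) := by
      apply monotoneOn_of_deriv_nonneg (convex_Ioo 0 1)
      · exact fun r hr => (hwd r hr).continuousAt.continuousWithinAt
      · rw [interior_Ioo]
        exact fun r hr => (hwd r hr).differentiableAt.differentiableWithinAt
      · rw [interior_Ioo]
        intro r hr
        rw [(hwd r hr).deriv]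
        have hs : 0 < Real.sqrt (1 - r) := Real.sqrt_pos.2 (by linarith [hr.2])
        have h1 : Real.sqrt (1 - r) ≤ Real.sqrt (1 - r ^ 2) :=
          Real.sqrt_le_sqrt (by nlinarith [hr.1, hr.2])
        have h2 : |deriv u r| ≤ C / Real.sqrt (1 - r) := by
          rw [le_div_iff₀ hs, mul_comm]
          exact (mul_le_mul_of_nonneg_right h1 (abs_nonneg _)).trans (hdb r hr)
        have e : (-2 * C) * (-1 / (2 * Real.sqrt (1 - r))) = C / Real.sqrt (1 - r) := by
          field_simp
        rw [e]
        linarith [neg_abs_le (deriv u r)]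
    have hbdd : BddAbove (w '' Ioo 0 1) := by
      refine ⟨c, ?_⟩
      rintro _ ⟨r, hr, rfl⟩
      have h1 := (le_abs_self _).trans (hub r hr)
      have h2 : 0 ≤ C * Real.sqrt (1 - r) := by positivity
      simp only [hw]
      linarith
    have ht := hmono.tendsto_nhdsWithin_Ioo_left (by simp) hbdd
    refine ⟨sSup (w '' Ioo 0 1) + 2 * C * Real.sqrt (1 - 1), ?_⟩
    have hcont : Continuous fun r : ℝ => 2 * C * Real.sqrt (1 - r) := by fun_prop
    refine (ht.add ((hcont.tendsto 1).mono_left nhdsWithin_le_nhds)).congr ?_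
    intro r
    simp only [hw]
    ring
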